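/- Let s>7/2 be an integer and α a multi-index with |α|≤s. Suppose ρ⁰∈H^{s+1}(𝕋³) with ‖ρ⁰‖_{H^{s+1}}≤K and ρ⁰≥ρ̂>0; let N∈H^s(𝕋³) with N+ρ⁰≥ρ̂/2 on 𝕋³, and let Θ∈H^{s+1}(𝕋³). Then for every η>0 there is a constant C_η=C(η,s,K,ρ̂) such that |⟨∂^α_x((1/(N+ρ⁰))ΔΘ) − (1/(N+ρ⁰))∂^α_xΔΘ, ∂^α_xΘ⟩_{L²(𝕋³)}| ≤ η‖∇Θ‖²_{H^s} + C_η(‖(N,Θ)‖^s_{H^s}+1)(‖∂^α_xΘ‖²_{L²}+‖∂^α_xN‖²_{L²}). -/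

import Mathlib

open MeasureTheory Real
open scoped ENNReal

noncomputable section

/-! ### Basic setup: periodic fields on the torus `𝕋³ = (ℝ/2πℤ)³`

Functions on the torus are modelled as `2π`-periodic functions on `ℝ³`,
with all integrals (`L²` and `H^s` norms, inner products) taken over the
fundamental cube `Q3 = [0,2π]³`. -/

/-- A point of space `ℝ³`. -/
abbrev Pt : Type := Fin 3 → ℝ

/-- Scalar fields. -/
abbrev SF : Type := Pt → ℝ

/-- Vector fields, componentwise. -/
abbrev VF : Type := Fin 3 → SF

/-- The fundamental cube `[0,2π]³` of the torus. -/
def Q3 : Set Pt := Set.univ.pi fun _ => Set.Icc 0 (2 * π)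

/-- `2π`-periodicity in each coordinate: such a function descends to `𝕋³`. -/
def PerS (f : SF) : Prop := ∀ (x : Pt) (i : Fin 3), f (x + Pi.single i (2 * π)) = f x

/-- Componentwise periodicity of a vector field. -/
def PerV (v : VF) : Prop := ∀ i, PerS (v i)

/-- SmoothS scalar field (proxy for membership in the Sobolev spaces `H^k(𝕋³)`,
together with periodicity). -/
abbrev SmoothS (f : SF) : Prop := ContDiff ℝ (⊤ : ℕ∞) f

/-- SmoothS vector field. -/
abbrev SmoothV (v : VF) : Prop := ∀ i, ContDiff ℝ (⊤ : ℕ∞) (v i)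

/-- Partial derivative `∂_i`. -/
def pd (i : Fin 3) (f : SF) : SF := fun x => fderiv ℝ f x (Pi.single i 1)

/-- Iterated partial derivative in a fixed direction. -/
def pdIter (i : Fin 3) : ℕ → SF → SF
  | 0, f => f
  | n + 1, f => pd i (pdIter i n f)

/-- The spatial derivative `∂^α_x` for a multi-index `α`. -/
def mderiv (α : Fin 3 → ℕ) (f : SF) : SF :=
  pdIter 0 (α 0) (pdIter 1 (α 1) (pdIter 2 (α 2) f))

/-- `∂^α_x` of a vector field, componentwise. -/
def mderivV (α : Fin 3 → ℕ) (v : VF) : VF := fun i => mderiv α (v i)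

/-- `L²(𝕋³)` norm of a scalar field. -/
def L2 (f : SF) : ℝ := (∫ x in Q3, (f x) ^ 2) ^ (1/2 : ℝ)

/-- `L²(𝕋³)` norm of a vector field. -/
def L2V (v : VF) : ℝ := (∫ x in Q3, ∑ i, (v i x) ^ 2) ^ (1/2 : ℝ)

/-- `L²(𝕋³)` inner product of scalar fields. -/
def ip (f g : SF) : ℝ := ∫ x in Q3, f x * g x

/-- `L²(𝕋³)` inner product of vector fields. -/
def ipV (v w : VF) : ℝ := ∫ x in Q3, ∑ i, v i x * w i x

/-- The finite set of multi-indices `α` with `|α| ≤ s`. -/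
def midx (s : ℕ) : Finset (Fin 3 → ℕ) :=
  (Fintype.piFinset fun _ => Finset.range (s + 1)).filter fun α => (∑ i, α i) ≤ s

/-- `H^s(𝕋³)` norm of a scalar field. -/
def HsNorm (s : ℕ) (f : SF) : ℝ := (∑ α ∈ midx s, (L2 (mderiv α f)) ^ 2) ^ (1/2 : ℝ)

/-- `H^s(𝕋³)` norm of a vector field. -/
def HsNormV (s : ℕ) (v : VF) : ℝ := (∑ i, (HsNorm s (v i)) ^ 2) ^ (1/2 : ℝ)

/-! ### Differential operators -/

/-- Gradient of a scalar field. -/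
def grad (f : SF) : VF := fun i => pd i f

/-- Divergence of a vector field. -/
def divv (v : VF) : SF := fun x => ∑ i, pd i (v i) x

/-- Laplacian of a scalar field. -/
def lap (f : SF) : SF := fun x => ∑ i, pd i (pd i f) x

/-- Curl of a vector field. -/
def curl (v : VF) : VF :=
  ![fun x => pd 1 (v 2) x - pd 2 (v 1) x,
    fun x => pd 2 (v 0) x - pd 0 (v 2) x,
    fun x => pd 0 (v 1) x - pd 1 (v 0) x]

/-- Cross product of vector fields. -/
def cross (a b : VF) : VF :=
  ![fun x => a 1 x * b 2 x - a 2 x * b 1 x,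
    fun x => a 2 x * b 0 x - a 0 x * b 2 x,
    fun x => a 0 x * b 1 x - a 1 x * b 0 x]

/-- Pointwise dot product of vector fields. -/
def vdot (a b : VF) : SF := fun x => ∑ i, a i x * b i x

/-- Pointwise squared Euclidean norm `|a|²` of a vector field. -/
def normSq (a : VF) : SF := fun x => ∑ i, (a i x) ^ 2

/-- Convective derivative `(u·∇)f`. -/
def conv (u : VF) (f : SF) : SF := fun x => ∑ i, u i x * pd i f x

/-- Convective derivative `(u·∇)v` of a vector field, componentwise. -/
def convV (u v : VF) : VF := fun j => conv u (v j)

/-- Symmetric gradient `D(u) = (∇u + ∇uᵀ)/2`, entrywise. -/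
def Dsym (u : VF) (i j : Fin 3) : SF := fun x => (pd j (u i) x + pd i (u j) x) / 2

/-- Squared Frobenius norm `|D(u)|²`. -/
def DabsSq (u : VF) : SF := fun x => ∑ i, ∑ j, (Dsym u i j x) ^ 2

/-- Squared Frobenius norm `|∇v|²` of the Jacobian of a vector field. -/
def gradSq (v : VF) : SF := fun x => ∑ i, ∑ j, (pd j (v i) x) ^ 2

/-- Squared Euclidean norm `|∇f|²` of the gradient of a scalar field. -/
def gradSqS (f : SF) : SF := fun x => ∑ i, (pd i f x) ^ 2

/-- Viscous stress tensor `Ψ(u) = 2μ D(u) + λ (div u) I₃`, entrywise. -/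
def Psi (μ lam : ℝ) (u : VF) (i j : Fin 3) : SF :=
  fun x => 2 * μ * Dsym u i j x + lam * divv u x * (if i = j then 1 else 0)

/-- `div Ψ(u)`, componentwise. -/
def divPsi (μ lam : ℝ) (u : VF) : VF := fun i => fun x => ∑ j, pd j (Psi μ lam u i j) x

/-- The viscous dissipation `Ψ(u):∇u = 2μ|D(u)|² + λ(div u)²`. -/
def PsiColon (μ lam : ℝ) (u : VF) : SF :=
  fun x => ∑ i, ∑ j, Psi μ lam u i j x * pd j (u i) x

/-- Pointwise time derivative of a time-dependent scalar field. -/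
def dt (f : ℝ → SF) : ℝ → SF := fun t x => deriv (fun τ => f τ x) t

/-- Pointwise time derivative of a time-dependent vector field. -/
def dtV (v : ℝ → VF) : ℝ → VF := fun t i x => deriv (fun τ => v τ i x) t

/-- The time interval `[0, T)` for `T ∈ (0, +∞]`. -/
def Dom (T : ℝ≥0∞) : Set ℝ := {t : ℝ | 0 ≤ t ∧ ENNReal.ofReal t < T}

/-- Continuity in time with values in `H^k(𝕋³)` on a time set `D`
(the class `C⁰(D, H^k)`). -/
def ContHs (k : ℕ) (D : Set ℝ) (f : ℝ → SF) : Prop :=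
  ∀ t₀ ∈ D, ∀ ε > (0:ℝ), ∃ δ > (0:ℝ), ∀ t ∈ D, |t - t₀| < δ →
    HsNorm k (fun x => f t x - f t₀ x) < ε

/-- `C⁰(D, H^k)` for vector fields. -/
def ContHsV (k : ℕ) (D : Set ℝ) (v : ℝ → VF) : Prop := ∀ i, ContHs k D fun t => v t i

/-! ### The full compressible MHD system and the electromagnetic fluid system -/

/-- Classical solution of the full compressible MHD system
`∂_tρ + div(ρu) = 0`,
`ρ(∂_tu + u·∇u) + ∇(ρθ) = div Ψ(u) + curl H × H`,
`ρ(∂_tθ + u·∇θ) + ρθ div u = κΔθ + Ψ(u):∇u + |curl H|²`,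
`∂_tH − curl(u×H) = −curl(curl H)`, `div H = 0`
on the torus, on the time set `D` (all physical constants `𝔯 = c_V = σ = μ₀ = 1`). -/
structure IsMHDSol (μ lam κ : ℝ) (D : Set ℝ) (ρ θ : ℝ → SF) (u H : ℝ → VF) : Prop where
  perρ : ∀ t ∈ D, PerS (ρ t)
  perθ : ∀ t ∈ D, PerS (θ t)
  peru : ∀ t ∈ D, PerV (u t)
  perH : ∀ t ∈ D, PerV (H t)
  smρ : ∀ t ∈ D, SmoothS (ρ t)
  smθ : ∀ t ∈ D, SmoothS (θ t)
  smu : ∀ t ∈ D, SmoothV (u t)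
  smH : ∀ t ∈ D, SmoothV (H t)
  tdρ : ∀ (x : Pt), ∀ t ∈ D, DifferentiableAt ℝ (fun τ => ρ τ x) t
  tdθ : ∀ (x : Pt), ∀ t ∈ D, DifferentiableAt ℝ (fun τ => θ τ x) t
  tdu : ∀ (i : Fin 3) (x : Pt), ∀ t ∈ D, DifferentiableAt ℝ (fun τ => u τ i x) t
  tdH : ∀ (i : Fin 3) (x : Pt), ∀ t ∈ D, DifferentiableAt ℝ (fun τ => H τ i x) t
  mass : ∀ t ∈ D, ∀ x, dt ρ t x + divv (fun i y => ρ t y * u t i y) x = 0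
  mom : ∀ t ∈ D, ∀ x, ∀ i,
    ρ t x * (dtV u t i x + convV (u t) (u t) i x) + pd i (fun y => ρ t y * θ t y) x
      = divPsi μ lam (u t) i x + cross (curl (H t)) (H t) i x
  temp : ∀ t ∈ D, ∀ x,
    ρ t x * (dt θ t x + conv (u t) (θ t) x) + ρ t x * θ t x * divv (u t) x
      = κ * lap (θ t) x + PsiColon μ lam (u t) x + normSq (curl (H t)) x
  induction : ∀ t ∈ D, ∀ x, ∀ i,
    dtV H t i x - curl (cross (u t) (H t)) i x = - curl (curl (H t)) i x
  divH : ∀ t ∈ D, ∀ x, divv (H t) x = 0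

/-- Classical solution of the electromagnetic fluid system with dielectric
constant `ε > 0`:
`∂_tρ + div(ρu) = 0`,
`ρ(∂_tu + u·∇u) + ∇(ρθ) = div Ψ(u) + (E + u×H) × H`,
`ρ(∂_tθ + u·∇θ) + ρθ div u = κΔθ + Ψ(u):∇u + |E + u×H|²`,
`ε∂_tE − curl H + E + u×H = 0`,
`∂_tH + curl E = 0`, `div H = 0`
on the torus, on the time set `D`. -/
structure IsEMSol (μ lam κ eps : ℝ) (D : Set ℝ) (ρ θ : ℝ → SF) (u E H : ℝ → VF) : Prop where
  perρ : ∀ t ∈ D, PerS (ρ t)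
  perθ : ∀ t ∈ D, PerS (θ t)
  peru : ∀ t ∈ D, PerV (u t)
  perE : ∀ t ∈ D, PerV (E t)
  perH : ∀ t ∈ D, PerV (H t)
  smρ : ∀ t ∈ D, SmoothS (ρ t)
  smθ : ∀ t ∈ D, SmoothS (θ t)
  smu : ∀ t ∈ D, SmoothV (u t)
  smE : ∀ t ∈ D, SmoothV (E t)
  smH : ∀ t ∈ D, SmoothV (H t)
  tdρ : ∀ (x : Pt), ∀ t ∈ D, DifferentiableAt ℝ (fun τ => ρ τ x) t
  tdθ : ∀ (x : Pt), ∀ t ∈ D, DifferentiableAt ℝ (fun τ => θ τ x) t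
  tdu : ∀ (i : Fin 3) (x : Pt), ∀ t ∈ D, DifferentiableAt ℝ (fun τ => u τ i x) t
  tdE : ∀ (i : Fin 3) (x : Pt), ∀ t ∈ D, DifferentiableAt ℝ (fun τ => E τ i x) t
  tdH : ∀ (i : Fin 3) (x : Pt), ∀ t ∈ D, DifferentiableAt ℝ (fun τ => H τ i x) t
  mass : ∀ t ∈ D, ∀ x, dt ρ t x + divv (fun i y => ρ t y * u t i y) x = 0
  mom : ∀ t ∈ D, ∀ x, ∀ i,
    ρ t x * (dtV u t i x + convV (u t) (u t) i x) + pd i (fun y => ρ t y * θ t y) x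
      = divPsi μ lam (u t) i x
        + cross (fun j y => E t j y + cross (u t) (H t) j y) (H t) i x
  temp : ∀ t ∈ D, ∀ x,
    ρ t x * (dt θ t x + conv (u t) (θ t) x) + ρ t x * θ t x * divv (u t) x
      = κ * lap (θ t) x + PsiColon μ lam (u t) x
        + normSq (fun j y => E t j y + cross (u t) (H t) j y) x
  faraday : ∀ t ∈ D, ∀ x, ∀ i,
    eps * dtV E t i x - curl (H t) i x + E t i x + cross (u t) (H t) i x = 0
  ampere : ∀ t ∈ D, ∀ x, ∀ i, dtV H t i x + curl (E t) i x = 0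
  divH : ∀ t ∈ D, ∀ x, divv (H t) x = 0

/-- The electric field `E⁰ = curl H⁰ − u⁰ × H⁰` induced by the limiting MHD flow. -/
def Efield (u H : VF) : VF := fun i x => curl H i x - cross u H i x

/-- `(N,U,Θ,F,G)` solves the error system obtained by subtracting the full
compressible MHD equations (background solution `(ρ⁰,u⁰,θ⁰,H⁰)`, with induced
electric field `E⁰ = curl H⁰ − u⁰×H⁰`) from the `ε`-dielectric electromagnetic
fluid system: equivalently, `(ρ⁰+N, u⁰+U, θ⁰+Θ, E⁰+F, H⁰+G)` solves the
electromagnetic fluid system. -/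
def IsErrSol (μ lam κ eps : ℝ) (D : Set ℝ) (ρ0 θ0 : ℝ → SF) (u0 H0 : ℝ → VF)
    (N Θ : ℝ → SF) (U F G : ℝ → VF) : Prop :=
  IsEMSol μ lam κ eps D
    (fun t x => ρ0 t x + N t x) (fun t x => θ0 t x + Θ t x)
    (fun t i x => u0 t i x + U t i x)
    (fun t i x => Efield (u0 t) (H0 t) i x + F t i x)
    (fun t i x => H0 t i x + G t i x)

/-- The error-system energy `‖ℰ‖_s = ‖(N,U,Θ,G)‖_s` (sum of the `H^s` norms). -/
def Enorm (s : ℕ) (N Θ : SF) (U G : VF) : ℝ :=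
  HsNorm s N + HsNormV s U + HsNorm s Θ + HsNormV s G

/-- The squared `ε`-weighted energy `⫴ℰ⫴²_s = ‖ℰ‖²_s + ε‖F‖²_s`. -/
def EnormSq (s : ℕ) (eps : ℝ) (N Θ : SF) (U F G : VF) : ℝ :=
  (Enorm s N Θ U G) ^ 2 + eps * (HsNormV s F) ^ 2

end

/-! Put `u = N + ρ⁰` and `R = √(1 + ‖u‖_{H^s})`. By Leibniz' rule the commutator `[∂^α, u⁻¹] ΔΘ` is
a sum of products `∂^β u⁻¹ ∂^{α-β} ΔΘ` with `β ≠ 0`, and Young's inequality reduces the theorem to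
`‖[∂^α, u⁻¹] ΔΘ‖_{L²} = O(R^s ‖∇Θ‖_{H^s})`.

Each derivative of `u⁻¹` must therefore cost only one power of `R`, whereas differentiating naively
costs a factor `‖∂_i u‖_{L^∞} = O(R²)`. The gain comes from Glaeser's inequality
`|∂_i u|² ≤ 2 u sup ∂_i² u`, valid because `u > 0` on the whole torus: together with `u ≥ ρ̂/2` it
gives `u⁻¹ ∂_i u = O(R)`. Derivatives of `u⁻¹` of higher order follow by induction from
`∂^β (u u⁻¹) = 0`.

The embedding `H² ⊂ L^∞` on a cube is obtained by averaging Taylor's formula over the base point;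
in dimension three the resulting kernel `t · t^(-3/2)` is integrable at `0`. -/

section

open Finset Asymptotics Filter

section Calculus

variable {f g : SF}

protected lemma SmoothS.pd (hf : SmoothS f) (i : Fin 3) : SmoothS (pd i f) :=
  (hf.fderiv_right (m := (⊤ : ℕ∞)) le_rfl).clm_apply contDiff_const

protected lemma SmoothS.pdIter (hf : SmoothS f) (i : Fin 3) (n : ℕ) : SmoothS (pdIter i n f) := by
  induction n with
  | zero => exact hf
  | succ n ih => exact ih.pd i

protected lemma SmoothS.mderiv (hf : SmoothS f) (α : Fin 3 → ℕ) : SmoothS (mderiv α f) :=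
  ((hf.pdIter _ _).pdIter _ _).pdIter _ _

protected lemma PerS.pd (hf : PerS f) (i : Fin 3) : PerS (pd i f) := by
  intro x j
  have h := fderiv_comp_add_right (𝕜 := ℝ) (f := f) (x := x) (Pi.single j (2 * π))
  simp only [pd, ← h, hf _ j]

protected lemma PerS.pdIter (hf : PerS f) (i : Fin 3) (n : ℕ) : PerS (pdIter i n f) := by
  induction n with
  | zero => exact hf
  | succ n ih => exact ih.pd i

protected lemma PerS.mderiv (hf : PerS f) (α : Fin 3 → ℕ) : PerS (mderiv α f) :=
  ((hf.pdIter _ _).pdIter _ _).pdIter _ _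

lemma pd_comm (hf : SmoothS f) (i j : Fin 3) : pd i (pd j f) = pd j (pd i f) := by
  have pd_pd (i j : Fin 3) (x : Pt) : pd i (pd j f) x
      = fderiv ℝ (fderiv ℝ f) x (Pi.single i 1) (Pi.single j 1) := by
    have hd : DifferentiableAt ℝ (fderiv ℝ f) x :=
      (hf.fderiv_right (m := (⊤ : ℕ∞)) le_rfl).differentiable (by simp) x
    change fderiv ℝ (fun y => fderiv ℝ f y (Pi.single j 1)) x (Pi.single i 1) = _
    simp [fderiv_clm_apply hd (differentiableAt_const _)]
  have hsymm (x : Pt) : IsSymmSndFDerivAt ℝ f x := hf.contDiffAt.isSymmSndFDerivAt <| by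
    simpa using WithTop.coe_le_coe.2 (le_top (a := (2 : ℕ∞)))
  ext x
  rw [pd_pd, pd_pd, hsymm x]

lemma pdIter_pd_comm (hf : SmoothS f) (i j : Fin 3) (n : ℕ) :
    pdIter i n (pd j f) = pd j (pdIter i n f) := by
  induction n with
  | zero => rfl
  | succ n ih => exact (congrArg (pd i) ih).trans (pd_comm (hf.pdIter i n) i j)

lemma pdIter_comm (hf : SmoothS f) (i j : Fin 3) (m n : ℕ) :
    pdIter i m (pdIter j n f) = pdIter j n (pdIter i m f) := by
  induction n with
  | zero => rfl
  | succ n ih => exact (pdIter_pd_comm (hf.pdIter j n) i j m).trans (congrArg (pd j) ih)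

lemma pdIter_add_index (i : Fin 3) (m n : ℕ) (f : SF) :
    pdIter i (m + n) f = pdIter i m (pdIter i n f) := by
  induction m with
  | zero => rw [Nat.zero_add]; rfl
  | succ m ih => rw [Nat.succ_add]; exact congrArg (pd i) ih

lemma mderiv_mderiv (hf : SmoothS f) (α β : Fin 3 → ℕ) :
    mderiv α (mderiv β f) = mderiv (α + β) f := by
  simp only [mderiv, Pi.add_apply, pdIter_add_index]
  rw [pdIter_comm ((hf.pdIter 2 _).pdIter 1 _) 2 0, pdIter_comm (hf.pdIter 2 _) 2 1,
    pdIter_comm (((hf.pdIter 2 _).pdIter 2 _).pdIter 1 _) 1 0]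

lemma mderiv_single_one (i : Fin 3) (f : SF) : mderiv (Pi.single i 1) f = pd i f := by
  fin_cases i <;> rfl

lemma mderiv_pd (hf : SmoothS f) (α : Fin 3 → ℕ) (i : Fin 3) :
    mderiv α (pd i f) = mderiv (α + Pi.single i 1) f := by
  rw [← mderiv_single_one, mderiv_mderiv hf]

lemma pd_sum_smul {ι : Type*} {t : Finset ι} {F : ι → SF} (hF : ∀ k ∈ t, SmoothS (F k))
    (c : ι → ℝ) (i : Fin 3) : pd i (∑ k ∈ t, c k • F k) = ∑ k ∈ t, c k • pd i (F k) := by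
  ext x
  have hd (k) (hk : k ∈ t) : DifferentiableAt ℝ (F k) x := (hF k hk).differentiable (by simp) x
  simp only [pd, fderiv_sum fun k hk => (hd k hk).const_smul (c k),
    _root_.sum_apply, Finset.sum_apply, Pi.smul_apply]
  exact sum_congr rfl fun k hk => by rw [fderiv_const_smul (hd k hk)]; rfl

lemma pdIter_sum_smul {ι : Type*} {t : Finset ι} {F : ι → SF} (hF : ∀ k ∈ t, SmoothS (F k))
    (c : ι → ℝ) (i : Fin 3) (n : ℕ) :
    pdIter i n (∑ k ∈ t, c k • F k) = ∑ k ∈ t, c k • pdIter i n (F k) := by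
  induction n with
  | zero => rfl
  | succ n ih =>
    exact (congrArg (pd i) ih).trans (pd_sum_smul (fun k hk => (hF k hk).pdIter i n) c i)

lemma mderiv_sum_smul {ι : Type*} {t : Finset ι} {F : ι → SF} (hF : ∀ k ∈ t, SmoothS (F k))
    (c : ι → ℝ) (α : Fin 3 → ℕ) :
    mderiv α (∑ k ∈ t, c k • F k) = ∑ k ∈ t, c k • mderiv α (F k) := by
  unfold mderiv
  rw [pdIter_sum_smul hF, pdIter_sum_smul fun k hk => (hF k hk).pdIter _ _,
    pdIter_sum_smul fun k hk => ((hF k hk).pdIter _ _).pdIter _ _]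

lemma pd_mul (hf : SmoothS f) (hg : SmoothS g) (i : Fin 3) :
    pd i (f * g) = pd i f * g + f * pd i g := by
  ext x
  have h := fderiv_mul (hf.differentiable (by simp) x) (hg.differentiable (by simp) x)
  simpa [pd, mul_comm (g x), add_comm] using congrArg (· (Pi.single i 1)) h

lemma pdIter_mul (hf : SmoothS f) (hg : SmoothS g) (i : Fin 3) (n : ℕ) :
    pdIter i n (f * g) = ∑ k ∈ Iic n, (n.choose k : ℝ) • (pdIter i k f * pdIter i (n - k) g) := by
  simp only [← Nat.range_succ_eq_Iic]
  induction n with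
  | zero => simp [pdIter]
  | succ n ih =>
    have hsmooth (k) : SmoothS (pdIter i k f * pdIter i (n - k) g) :=
      (hf.pdIter i k).mul (hg.pdIter i _)
    simp only [Nat.cast_smul_eq_nsmul,
      sum_choose_succ_nsmul (fun k l => pdIter i k f * pdIter i l g)]
    rw [pdIter, ih, pd_sum_smul fun k _ => hsmooth k, ← sum_add_distrib]
    refine sum_congr rfl fun k hk => ?_
    rw [pd_mul (hf.pdIter i k) (hg.pdIter i _), Nat.cast_smul_eq_nsmul, smul_add, add_comm,
      Nat.succ_sub (mem_range_succ_iff.1 hk)]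
    rfl

lemma sum_Iic_fin_three {M : Type*} [AddCommMonoid M] (α : Fin 3 → ℕ) (F : (Fin 3 → ℕ) → M) :
    ∑ β ∈ Iic α, F β
      = ∑ m ∈ Iic (α 2), ∑ l ∈ Iic (α 1), ∑ k ∈ Iic (α 0), F ![k, l, m] := by
  have eta (β : Fin 3 → ℕ) : ![β 0, β 1, β 2] = β := FinVec.etaExpand_eq β
  simp_rw [← sum_product']
  refine sum_nbij' (fun β => (β 2, β 1, β 0)) (fun k => ![k.2.2, k.2.1, k.1]) ?_ ?_ ?_ ?_ ?_
    <;> simp [Pi.le_def, Fin.forall_fin_succ, eta] <;> tauto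

lemma mderiv_mul (hf : SmoothS f) (hg : SmoothS g) (α : Fin 3 → ℕ) :
    mderiv α (f * g)
      = ∑ β ∈ Iic α, (∏ i, ((α i).choose (β i) : ℝ)) • (mderiv β f * mderiv (α - β) g) := by
  have smooth_mul {f g : SF} (hf : SmoothS f) (hg : SmoothS g) (i : Fin 3) (n k : ℕ) :
      SmoothS (pdIter i k f * pdIter i (n - k) g) := (hf.pdIter i k).mul (hg.pdIter i _)
  rw [sum_Iic_fin_three, mderiv, pdIter_mul hf hg,
    pdIter_sum_smul fun m _ => smooth_mul hf hg 2 _ m,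
    pdIter_sum_smul fun m _ => (smooth_mul hf hg 2 _ m).pdIter _ _]
  refine sum_congr rfl fun m _ => ?_
  have hf2 := hf.pdIter 2 m
  have hg2 := hg.pdIter 2 (α 2 - m)
  rw [pdIter_mul hf2 hg2, pdIter_sum_smul fun l _ => smooth_mul hf2 hg2 1 _ l, smul_sum]
  refine sum_congr rfl fun l _ => ?_
  rw [pdIter_mul (hf2.pdIter 1 l) (hg2.pdIter 1 _), smul_sum, smul_sum]
  refine sum_congr rfl fun k _ => ?_
  rw [smul_smul, smul_smul, Fin.prod_univ_three]
  simp only [mderiv, Pi.sub_apply, Matrix.cons_val]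
  ring_nf

lemma lap_eq_sum (f : SF) : lap f = ∑ i, pd i (pd i f) := by
  ext x
  simp [lap]

end Calculus

section MultiIndex

/-- The order `|α|` of a multi-index. -/
def ord (α : Fin 3 → ℕ) : ℕ := ∑ i, α i

/-- The commutator `[∂^α, a] g` of `∂^α` with multiplication by `a`. -/
noncomputable def mcomm (α : Fin 3 → ℕ) (a g : SF) : SF := mderiv α (a * g) - a * mderiv α g

variable {α β : Fin 3 → ℕ}

lemma ord_add (α β : Fin 3 → ℕ) : ord (α + β) = ord α + ord β := sum_add_distrib

lemma ord_single_one (i : Fin 3) : ord (Pi.single i 1) = 1 := by simp [ord]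

lemma ord_eq_zero : ord α = 0 ↔ α = 0 := by simp [ord, funext_iff]

lemma ord_sub_add_ord (h : β ≤ α) : ord (α - β) + ord β = ord α := by
  rw [← ord_add, tsub_add_cancel_of_le h]

lemma exists_add_single_eq (h : α ≠ 0) : ∃ (β : Fin 3 → ℕ) (i : Fin 3), β + Pi.single i 1 = α := by
  obtain ⟨i, hi⟩ := Function.ne_iff.1 h
  exact ⟨α - Pi.single i 1, i, tsub_add_cancel_of_le <| update_le_iff.2
    ⟨Nat.one_le_iff_ne_zero.2 hi, fun _ _ => zero_le⟩⟩

lemma exists_eq_single_of_ord_eq_one (h : ord α = 1) : ∃ i, α = Pi.single i 1 := by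
  obtain ⟨β, i, rfl⟩ := exists_add_single_eq (α := α) (by rintro rfl; simp [ord] at h)
  rw [ord_add, ord_single_one, Nat.add_eq_right, ord_eq_zero] at h
  exact ⟨i, by rw [h, zero_add]⟩

lemma mem_midx {s : ℕ} : α ∈ midx s ↔ ord α ≤ s := by
  refine ⟨fun h => (mem_filter.1 h).2,
    fun h => mem_filter.2 ⟨Fintype.mem_piFinset.2 fun i => ?_, h⟩⟩
  exact mem_range_succ_iff.2 ((single_le_sum (fun _ _ => Nat.zero_le _) (mem_univ i)).trans h)

variable {f g u : SF}

lemma mderiv_zero_right (α : Fin 3 → ℕ) : mderiv α 0 = 0 := by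
  simpa using mderiv_sum_smul (t := ∅) (F := fun _ : ℕ => 0) (by simp) 0 α

lemma mderiv_one (hα : α ≠ 0) : mderiv α 1 = 0 := by
  obtain ⟨β, i, rfl⟩ := exists_add_single_eq hα
  have hpd : pd i 1 = 0 := by ext; simp [pd]
  rw [← mderiv_pd (f := 1) contDiff_const, hpd, mderiv_zero_right]

lemma mcomm_eq_sum (hf : SmoothS f) (hg : SmoothS g) (α : Fin 3 → ℕ) :
    mcomm α f g = ∑ β ∈ (Iic α).erase 0,
      (∏ i, ((α i).choose (β i) : ℝ)) • (mderiv β f * mderiv (α - β) g) := by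
  rw [mcomm, mderiv_mul hf hg, ← add_sum_erase _ _ (mem_Iic.2 zero_le)]
  simp [mderiv, pdIter]

lemma mderiv_inv (h0 : ∀ x, u x ≠ 0) (hα : α ≠ 0) :
    mderiv α u⁻¹ = -(u⁻¹ * mcomm α u u⁻¹) := by
  have hinv : u⁻¹ * u = 1 := funext fun x => inv_mul_cancel₀ (h0 x)
  rw [mcomm, mul_comm u, hinv, mderiv_one hα, zero_sub, mul_neg, ← mul_assoc, hinv, one_mul,
    neg_neg]

end MultiIndex

section Cube

/-- The sup norm over the cube `Q3`, standing for the `L^∞(𝕋³)` norm. As a real supremum it is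
meaningful only for `f` bounded on `Q3`, e.g. continuous. -/
noncomputable def Linf (f : SF) : ℝ := ⨆ x : Q3, |f x|

variable {f g : SF} {ι : Type*} {t : Finset ι} {F : ι → SF}

lemma isCompact_Q3 : IsCompact Q3 := isCompact_univ_pi fun _ => isCompact_Icc

lemma measurableSet_Q3 : MeasurableSet Q3 := isCompact_Q3.measurableSet

lemma convex_Q3 : Convex ℝ Q3 := convex_pi fun _ _ => convex_Icc _ _

lemma zero_mem_Q3 : (0 : Pt) ∈ Q3 := fun _ _ => ⟨le_rfl, two_pi_pos.le⟩

lemma integrableOn_Q3 (hf : Continuous f) : IntegrableOn f Q3 :=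
  hf.continuousOn.integrableOn_compact isCompact_Q3

lemma memLp_Q3 (hf : Continuous f) (p : ℝ≥0∞) : MemLp f p (volume.restrict Q3) := by
  have : IsFiniteMeasure (volume.restrict Q3) := ⟨by simpa using isCompact_Q3.measure_lt_top⟩
  obtain ⟨c, hc⟩ := isCompact_Q3.exists_bound_of_continuousOn hf.continuousOn
  exact .of_bound hf.aestronglyMeasurable c ((ae_restrict_iff' measurableSet_Q3).2 (.of_forall hc))

lemma Linf_nonneg (f : SF) : 0 ≤ Linf f := Real.iSup_nonneg fun _ => abs_nonneg _

lemma abs_le_Linf (hf : Continuous f) {x : Pt} (hx : x ∈ Q3) : |f x| ≤ Linf f := by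
  have h := isCompact_Q3.bddAbove_image hf.abs.continuousOn
  rw [Set.image_eq_range] at h
  exact le_ciSup h ⟨x, hx⟩

lemma Linf_le {c : ℝ} (h : ∀ x ∈ Q3, |f x| ≤ c) : Linf f ≤ c :=
  have : Nonempty Q3 := ⟨⟨0, zero_mem_Q3⟩⟩
  ciSup_le fun x => h x x.2

lemma Linf_neg (f : SF) : Linf (-f) = Linf f := by simp [Linf]

lemma Linf_mul_le (hf : Continuous f) (hg : Continuous g) : Linf (f * g) ≤ Linf f * Linf g :=
  Linf_le fun x hx => (abs_mul (f x) (g x)).trans_le <|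
    mul_le_mul (abs_le_Linf hf hx) (abs_le_Linf hg hx) (abs_nonneg _) (Linf_nonneg f)

lemma Linf_sum_smul_le (hF : ∀ k ∈ t, Continuous (F k)) (c : ι → ℝ) :
    Linf (∑ k ∈ t, c k • F k) ≤ ∑ k ∈ t, |c k| * Linf (F k) := by
  refine Linf_le fun x hx => ?_
  simp only [Finset.sum_apply, Pi.smul_apply, smul_eq_mul]
  refine (abs_sum_le_sum_abs _ _).trans (sum_le_sum fun k hk => ?_)
  rw [abs_mul]
  gcongr
  exact abs_le_Linf (hF k hk) hx

lemma PerS.abs_le_Linf (hper : PerS f) (hf : Continuous f) (x : Pt) : |f x| ≤ Linf f := by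
  let y : Pt := fun i => toIcoMod two_pi_pos 0 (x i)
  let n (i : Fin 3) : ℤ := toIcoDiv two_pi_pos 0 (x i)
  have hy : y ∈ Q3 := fun i _ => by
    simpa using Set.Ico_subset_Icc_self (toIcoMod_mem_Ico two_pi_pos 0 (x i))
  have hperiod : Function.Periodic f (∑ i, n i • Pi.single i (2 * π)) :=
    sum_induction _ (Function.Periodic f) (fun _ _ => .add_period) (by simp [Function.Periodic])
      fun i _ => Function.Periodic.zsmul (fun z => hper z i) (n i)
  have hx : x = y + ∑ i, n i • Pi.single i (2 * π) := by
    ext j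
    simp [-zsmul_eq_mul, Finset.sum_apply, Pi.single_apply, y, n]
  rw [hx, hperiod]
  exact _root_.abs_le_Linf hf hy

lemma L2_eq_sqrt (f : SF) : L2 f = √(∫ x in Q3, f x ^ 2) := (sqrt_eq_rpow _).symm

lemma L2_nonneg (f : SF) : 0 ≤ L2 f := L2_eq_sqrt f ▸ sqrt_nonneg _

lemma L2_sq (f : SF) : L2 f ^ 2 = ∫ x in Q3, f x ^ 2 := by
  rw [L2_eq_sqrt, sq_sqrt (integral_nonneg fun x => sq_nonneg _)]

lemma L2_eq_lpNorm (hf : Continuous f) : L2 f = lpNorm f 2 (volume.restrict Q3) := by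
  rw [lpNorm_eq_integral_norm_rpow_toReal two_ne_zero ENNReal.ofNat_ne_top
    hf.aestronglyMeasurable]
  simp [L2]

lemma L2_neg (f : SF) : L2 (-f) = L2 f := by simp [L2]

lemma L2_add_le (hf : Continuous f) (hg : Continuous g) : L2 (f + g) ≤ L2 f + L2 g := by
  rw [L2_eq_lpNorm hf, L2_eq_lpNorm hg, L2_eq_lpNorm (hf.add hg)]
  exact lpNorm_add_le (memLp_Q3 hf 2) one_le_two

lemma L2_sum_smul_le (hF : ∀ k ∈ t, Continuous (F k)) (c : ι → ℝ) :
    L2 (∑ k ∈ t, c k • F k) ≤ ∑ k ∈ t, |c k| * L2 (F k) := by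
  have hcF (k) (hk : k ∈ t) : Continuous (c k • F k) := (hF k hk).const_smul (c k)
  rw [L2_eq_lpNorm (by simpa only [← Finset.sum_fn] using continuous_finsetSum t hcF)]
  refine (lpNorm_sum_le (fun k hk => memLp_Q3 (hcF k hk) 2) one_le_two).trans_eq ?_
  refine sum_congr rfl fun k hk => ?_
  rw [lpNorm_const_smul, L2_eq_lpNorm (hF k hk), coe_nnnorm, norm_eq_abs]

lemma L2_mul_le (hf : Continuous f) (hg : Continuous g) : L2 (f * g) ≤ Linf f * L2 g := by
  refine le_of_sq_le_sq ?_ (mul_nonneg (Linf_nonneg f) (L2_nonneg g))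
  rw [mul_pow, L2_sq, L2_sq, ← integral_const_mul]
  refine setIntegral_mono_on (integrableOn_Q3 ((hf.mul hg).pow 2))
    (integrableOn_Q3 ((hg.pow 2).const_mul _)) measurableSet_Q3 fun x hx => ?_
  rw [Pi.mul_apply, mul_pow, ← sq_abs (f x)]
  gcongr
  exact abs_le_Linf hf hx

lemma L2_le_mul_Linf (hf : Continuous f) : L2 f ≤ L2 1 * Linf f := by
  simpa [mul_comm] using L2_mul_le hf (g := 1) continuous_const

lemma integral_abs_mul_abs_le (hf : Continuous f) (hg : Continuous g) :
    ∫ x in Q3, |f x| * |g x| ≤ L2 f * L2 g := by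
  have hmem {h : SF} (hh : Continuous h) : MemLp h (ENNReal.ofReal 2) (volume.restrict Q3) :=
    memLp_Q3 hh _
  refine (integral_mul_norm_le_Lp_mul_Lq .two_two (hmem hf) (hmem hg)).trans_eq ?_
  simp [L2]

lemma abs_ip_le (hf : Continuous f) (hg : Continuous g) : |ip f g| ≤ L2 f * L2 g :=
  abs_integral_le_integral_abs.trans <| by
    simpa only [abs_mul] using integral_abs_mul_abs_le hf hg

end Cube

section SobolevNorm

variable {f g : SF} {k m : ℕ}

lemma HsNorm_eq_sqrt (k : ℕ) (f : SF) : HsNorm k f = √(∑ α ∈ midx k, L2 (mderiv α f) ^ 2) :=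
  (sqrt_eq_rpow _).symm

lemma HsNorm_nonneg (k : ℕ) (f : SF) : 0 ≤ HsNorm k f := HsNorm_eq_sqrt k f ▸ sqrt_nonneg _

lemma L2_mderiv_le_HsNorm {α : Fin 3 → ℕ} (hα : ord α ≤ k) (f : SF) :
    L2 (mderiv α f) ≤ HsNorm k f := by
  rw [HsNorm_eq_sqrt]
  exact le_sqrt_of_sq_le <|
    single_le_sum (f := fun α => L2 (mderiv α f) ^ 2) (fun _ _ => sq_nonneg _) (mem_midx.2 hα)

lemma HsNorm_mono (h : k ≤ m) (f : SF) : HsNorm k f ≤ HsNorm m f := by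
  rw [HsNorm_eq_sqrt, HsNorm_eq_sqrt]
  gcongr
  exact fun α hα => mem_midx.2 ((mem_midx.1 hα).trans h)

lemma HsNorm_mderiv_le (hf : SmoothS f) (γ : Fin 3 → ℕ) (k : ℕ) :
    HsNorm k (mderiv γ f) ≤ HsNorm (k + ord γ) f := by
  have hinj : Set.InjOn (fun α => α + γ) (midx k : Set (Fin 3 → ℕ)) :=
    (add_left_injective γ).injOn
  rw [HsNorm_eq_sqrt, HsNorm_eq_sqrt]
  simp_rw [mderiv_mderiv hf]
  rw [← sum_image (f := fun α => L2 (mderiv α f) ^ 2) hinj]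
  gcongr
  refine image_subset_iff.2 fun α hα => mem_midx.2 ?_
  rw [ord_add]
  exact Nat.add_le_add_right (mem_midx.1 hα) _

lemma HsNorm_pd_le (hf : SmoothS f) (i : Fin 3) (k : ℕ) :
    HsNorm k (pd i f) ≤ HsNorm (k + 1) f := by
  simpa only [mderiv_single_one, ord_single_one] using HsNorm_mderiv_le hf (Pi.single i 1) k

lemma mderiv_add (hf : SmoothS f) (hg : SmoothS g) (α : Fin 3 → ℕ) :
    mderiv α (f + g) = mderiv α f + mderiv α g := by
  simpa using mderiv_sum_smul (t := univ) (F := ![f, g])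
    (by simp [Fin.forall_fin_two, hf, hg]) 1 α

lemma HsNorm_add_le (hf : SmoothS f) (hg : SmoothS g) (k : ℕ) :
    HsNorm k (f + g) ≤ HsNorm k f + HsNorm k g := by
  calc HsNorm k (f + g)
      ≤ √(∑ α ∈ midx k, (L2 (mderiv α f) + L2 (mderiv α g)) ^ 2) := by
        rw [HsNorm_eq_sqrt]
        gcongr with α
        · exact L2_nonneg _
        · rw [mderiv_add hf hg]
          exact L2_add_le (hf.mderiv α).continuous (hg.mderiv α).continuous
    _ ≤ HsNorm k f + HsNorm k g := by
        simpa [HsNorm, sqrt_eq_rpow] using Lp_add_le_of_nonneg (midx k) one_le_two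
          (fun α _ => L2_nonneg (mderiv α f)) (fun α _ => L2_nonneg (mderiv α g))

lemma HsNorm_le_HsNormV (k : ℕ) (v : VF) (i : Fin 3) : HsNorm k (v i) ≤ HsNormV k v := by
  rw [HsNormV, ← sqrt_eq_rpow]
  exact le_sqrt_of_sq_le <|
    single_le_sum (f := fun i => HsNorm k (v i) ^ 2) (fun _ _ => sq_nonneg _) (mem_univ i)

lemma HsNorm_lap_le (hf : SmoothS f) (k : ℕ) :
    HsNorm k (lap f) ≤ 3 * HsNormV (k + 1) (grad f) := by
  have hpd (i : Fin 3) : SmoothS (pd i (pd i f)) := (hf.pd i).pd i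
  have hi (i : Fin 3) : HsNorm k (pd i (pd i f)) ≤ HsNormV (k + 1) (grad f) :=
    (HsNorm_pd_le (hf.pd i) i k).trans (HsNorm_le_HsNormV _ (grad f) i)
  calc HsNorm k (lap f)
      = HsNorm k (pd 0 (pd 0 f) + pd 1 (pd 1 f) + pd 2 (pd 2 f)) := by
        rw [lap_eq_sum, Fin.sum_univ_three]
    _ ≤ HsNorm k (pd 0 (pd 0 f)) + HsNorm k (pd 1 (pd 1 f)) + HsNorm k (pd 2 (pd 2 f)) :=
        (HsNorm_add_le ((hpd 0).add (hpd 1)) (hpd 2) k).trans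
          (add_le_add_left (HsNorm_add_le (hpd 0) (hpd 1) k) _)
    _ ≤ 3 * HsNormV (k + 1) (grad f) := by linarith [hi 0, hi 1, hi 2]

protected lemma SmoothS.lap (hf : SmoothS f) : SmoothS (lap f) :=
  ContDiff.sum fun i _ => (hf.pd i).pd i

end SobolevNorm

section SobolevEmbedding

/-- The `ℓ¹` norm `∑ᵢ |∂ᵢf|` of the gradient of `f`. -/
noncomputable def gradAbs (f : SF) : SF := ∑ i, |pd i f|

/-- The `ℓ¹` norm `∑ᵢⱼ |∂ⱼ∂ᵢf|` of the Hessian of `f`. -/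
noncomputable def hessAbs (f : SF) : SF := ∑ i, gradAbs (pd i f)

variable {f h : SF} {x : Pt}

lemma gradAbs_apply (f : SF) (x : Pt) : gradAbs f x = ∑ i, |pd i f x| := by
  simp [gradAbs, Finset.sum_apply]

lemma continuous_gradAbs (hf : SmoothS f) : Continuous (gradAbs f) :=
  (continuous_finsetSum univ fun i _ => (hf.pd i).continuous.abs).congr fun x =>
    (gradAbs_apply f x).symm

lemma gradAbs_nonneg (f : SF) (x : Pt) : 0 ≤ gradAbs f x :=
  gradAbs_apply f x ▸ sum_nonneg fun _ _ => abs_nonneg _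

lemma L2_gradAbs_le (hf : SmoothS f) : L2 (gradAbs f) ≤ 3 * HsNorm 1 f := by
  have h := L2_sum_smul_le (t := univ) (F := fun i => |pd i f|)
    (fun i _ => (hf.pd i).continuous.abs) 1
  have hi (i : Fin 3) : L2 |pd i f| ≤ HsNorm 1 f := by
    have habs : L2 |pd i f| = L2 (pd i f) := by simp [L2]
    rw [habs, ← mderiv_single_one]
    exact L2_mderiv_le_HsNorm (ord_single_one i).le f
  simp only [Fin.sum_univ_three, Pi.one_apply, one_smul, abs_one, one_mul] at h
  rw [gradAbs, Fin.sum_univ_three]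
  linarith [hi 0, hi 1, hi 2]

lemma continuous_hessAbs (hf : SmoothS f) : Continuous (hessAbs f) := by
  simpa only [hessAbs, ← Finset.sum_fn] using
    continuous_finsetSum univ fun i _ => continuous_gradAbs (hf.pd i)

lemma hessAbs_nonneg (f : SF) (x : Pt) : 0 ≤ hessAbs f x := by
  rw [hessAbs, Finset.sum_apply]
  exact sum_nonneg fun i _ => gradAbs_nonneg _ x

lemma L2_hessAbs_le (hf : SmoothS f) : L2 (hessAbs f) ≤ 9 * HsNorm 2 f := by
  have h := L2_sum_smul_le (t := univ) (F := fun i => gradAbs (pd i f))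
    (fun i _ => continuous_gradAbs (hf.pd i)) 1
  have hi (i : Fin 3) : L2 (gradAbs (pd i f)) ≤ 3 * HsNorm 2 f :=
    (L2_gradAbs_le (hf.pd i)).trans (by gcongr; exact HsNorm_pd_le hf i 1)
  simp only [Fin.sum_univ_three, Pi.one_apply, one_smul, abs_one, one_mul] at h
  rw [hessAbs, Fin.sum_univ_three]
  linarith [hi 0, hi 1, hi 2]

lemma fderiv_eq_sum_pd (f : SF) (x z : Pt) : fderiv ℝ f x z = ∑ i, z i * pd i f x := by
  simpa [pd] using congrArg (fderiv ℝ f x) (pi_eq_sum_univ' z)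

lemma abs_fderiv_le (f : SF) (x z : Pt) : |fderiv ℝ f x z| ≤ ‖z‖ * gradAbs f x := by
  rw [fderiv_eq_sum_pd, gradAbs_apply, mul_sum]
  refine (abs_sum_le_sum_abs _ _).trans (sum_le_sum fun i _ => ?_)
  rw [abs_mul]
  gcongr
  exact norm_le_pi_norm z i

lemma hasDerivAt_comp_line (hf : SmoothS f) (x z : Pt) (t : ℝ) :
    HasDerivAt (fun t : ℝ => f (x + t • z)) (fderiv ℝ f (x + t • z) z) t := by
  have hline : HasDerivAt (fun t : ℝ => x + t • z) z t := by
    simpa using ((hasDerivAt_id t).smul_const z).const_add x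
  exact (hf.differentiable (by simp) _).hasFDerivAt.comp_hasDerivAt t hline

lemma integral_mul_deriv_deriv {g g' g'' : ℝ → ℝ} (hg : ∀ t, HasDerivAt g (g' t) t)
    (hg' : ∀ t, HasDerivAt g' (g'' t) t) (hcont : Continuous g'') :
    ∫ t in (0 : ℝ)..1, t * g'' t = g' 1 - g 1 + g 0 := by
  have hderiv (t : ℝ) : HasDerivAt (fun t => t * g' t - g t) (t * g'' t) t := by
    convert! ((hasDerivAt_id t).mul (hg' t)).sub (hg t) using 1
    simp
  rw [intervalIntegral.integral_eq_sub_of_hasDerivAt (fun t _ => hderiv t)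
    ((continuous_id.mul hcont).intervalIntegrable 0 1)]
  ring

lemma hasDerivAt_fderiv_comp_line (hf : SmoothS f) (x z : Pt) (t : ℝ) :
    HasDerivAt (fun t : ℝ => fderiv ℝ f (x + t • z) z)
      (∑ i, z i * fderiv ℝ (pd i f) (x + t • z) z) t := by
  simp_rw [fderiv_eq_sum_pd f]
  exact .fun_sum fun i _ => (hasDerivAt_comp_line (hf.pd i) x z t).const_mul (z i)

lemma abs_sum_mul_fderiv_pd_le (f : SF) (x z : Pt) :
    |∑ i, z i * fderiv ℝ (pd i f) x z| ≤ ‖z‖ ^ 2 * hessAbs f x := by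
  rw [hessAbs, Finset.sum_apply, mul_sum]
  refine (abs_sum_le_sum_abs _ _).trans (sum_le_sum fun i _ => ?_)
  rw [abs_mul, sq, mul_assoc]
  gcongr
  · exact norm_le_pi_norm z i
  · exact abs_fderiv_le _ _ _

lemma abs_le_taylor (hf : SmoothS f) (x z : Pt) :
    |f x| ≤ |f (x + z)| + ‖z‖ * gradAbs f (x + z)
      + ‖z‖ ^ 2 * ∫ t in (0 : ℝ)..1, t * hessAbs f (x + t • z) := by
  let g'' (t : ℝ) : ℝ := ∑ i, z i * fderiv ℝ (pd i f) (x + t • z) z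
  have hline : Continuous fun t : ℝ => x + t • z := by fun_prop
  have hg'' : Continuous g'' := continuous_finsetSum _ fun i _ =>
    continuous_const.mul (((hf.pd i).continuous_fderiv_apply (by simp)).comp
      (hline.prodMk continuous_const))
  have htaylor := integral_mul_deriv_deriv (hasDerivAt_comp_line hf x z)
    (hasDerivAt_fderiv_comp_line hf x z) hg''
  simp only [one_smul, zero_smul, add_zero] at htaylor
  have hremainder : |∫ t in (0 : ℝ)..1, t * g'' t|
      ≤ ‖z‖ ^ 2 * ∫ t in (0 : ℝ)..1, t * hessAbs f (x + t • z) := by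
    rw [← intervalIntegral.integral_const_mul, ← norm_eq_abs]
    refine intervalIntegral.norm_integral_le_of_norm_le zero_le_one (.of_forall fun t ht => ?_) ?_
    · rw [norm_mul, norm_of_nonneg ht.1.le, mul_left_comm]
      exact mul_le_mul_of_nonneg_left (abs_sum_mul_fderiv_pd_le f _ z) ht.1.le
    · exact (continuous_const.mul (continuous_id.mul
        ((continuous_hessAbs hf).comp hline))).intervalIntegrable 0 1
  calc |f x| = |f (x + z) - fderiv ℝ f (x + z) z + ∫ t in (0 : ℝ)..1, t * g'' t| := by
        rw [htaylor]; ring_nf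
    _ ≤ |f (x + z)| + |fderiv ℝ f (x + z) z| + |∫ t in (0 : ℝ)..1, t * g'' t| :=
        (abs_add_le _ _).trans (add_le_add_left (abs_sub _ _) _)
    _ ≤ _ := add_le_add (add_le_add_right (abs_fderiv_le _ _ _) _) hremainder

lemma abs_integral_le_L2 (hh : Continuous h) : |∫ x in Q3, h x| ≤ L2 1 * L2 h := by
  simpa [ip] using abs_ip_le (f := 1) continuous_const hh

lemma L2_comp_homothety_le (hh : Continuous h) (hx : x ∈ Q3) {t : ℝ} (ht : t ∈ Set.Ioc 0 1) :
    L2 (fun w => h (x + t • (w - x))) ≤ t ^ (-(3 / 2) : ℝ) * L2 h := by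
  refine le_of_sq_le_sq ?_ (mul_nonneg (rpow_nonneg ht.1.le _) (L2_nonneg h))
  let F : SF := Q3.indicator fun y => h y ^ 2
  have hF : Integrable F :=
    (integrable_indicator_iff measurableSet_Q3).2 (integrableOn_Q3 (hh.pow 2))
  have hscale : ∫ w, F ((x - t • x) + t • w) = (t ^ (-(3 / 2) : ℝ)) ^ 2 * L2 h ^ 2 := by
    rw [Measure.integral_comp_smul volume (fun y => F ((x - t • x) + y)) t,
      integral_add_left_eq_self, integral_indicator measurableSet_Q3, L2_sq,
      ← rpow_mul_natCast ht.1.le]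
    norm_num [abs_of_pos ht.1, rpow_neg ht.1.le]
  have hcomp : Continuous fun w => h (x + t • (w - x)) ^ 2 := (hh.comp (by fun_prop)).pow 2
  rw [mul_pow, ← hscale, L2_sq, ← integral_indicator measurableSet_Q3]
  refine integral_mono ((integrable_indicator_iff measurableSet_Q3).2 (integrableOn_Q3 hcomp))
    ((hF.comp_add_left (x - t • x)).comp_smul ht.1.ne') fun w => ?_
  by_cases hw : w ∈ Q3
  · have hmem : x - t • x + t • w ∈ Q3 := by
      have := convex_Q3 hx hw (sub_nonneg.2 ht.2) ht.1.le (sub_add_cancel 1 t)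
      rwa [sub_smul, one_smul] at this
    have hcomb : x + t • (w - x) = x - t • x + t • w := by rw [smul_sub]; abel
    simp [F, hw, hmem, hcomb]
  · rw [Set.indicator_of_notMem hw]
    exact Set.indicator_nonneg (fun y _ => sq_nonneg _) _

lemma integral_integral_comp_homothety_le (hh : Continuous h) (hx : x ∈ Q3) :
    ∫ w in Q3, ∫ t in (0 : ℝ)..1, t * h (x + t • (w - x)) ≤ 2 * L2 1 * L2 h := by
  have hcont : Continuous (Function.uncurry fun (t : ℝ) w => t * h (x + t • (w - x))) :=
    continuous_fst.mul (hh.comp (by fun_prop))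
  have hint : Integrable (Function.uncurry fun (t : ℝ) w => t * h (x + t • (w - x)))
      ((volume.restrict (Set.uIoc 0 1)).prod (volume.restrict Q3)) := by
    rw [Measure.prod_restrict, Set.uIoc_of_le zero_le_one]
    exact (hcont.continuousOn.integrableOn_compact (isCompact_Icc.prod isCompact_Q3)).mono_set
      (Set.prod_mono_left Set.Ioc_subset_Icc_self)
  have hslice (t : ℝ) (ht : t ∈ Set.Ioc 0 1) :
      ‖∫ w in Q3, t * h (x + t • (w - x))‖ ≤ L2 1 * L2 h * t ^ (-(1 / 2) : ℝ) := by
    have hpow : t * t ^ (-(3 / 2) : ℝ) = t ^ (-(1 / 2) : ℝ) := by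
      rw [← rpow_one_add' ht.1.le (by norm_num)]; norm_num
    rw [integral_const_mul, norm_mul, norm_of_nonneg ht.1.le]
    calc t * ‖∫ w in Q3, h (x + t • (w - x))‖
        ≤ t * (L2 1 * (t ^ (-(3 / 2) : ℝ) * L2 h)) := by
          gcongr
          · exact ht.1.le
          · exact (abs_integral_le_L2 (hh.comp (by fun_prop))).trans
              (mul_le_mul_of_nonneg_left (L2_comp_homothety_le hh hx ht) (L2_nonneg 1))
      _ = L2 1 * L2 h * t ^ (-(1 / 2) : ℝ) := by rw [← hpow]; ring
  rw [← intervalIntegral_integral_swap hint]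
  calc ∫ t in (0 : ℝ)..1, ∫ w in Q3, t * h (x + t • (w - x))
      ≤ ∫ t in (0 : ℝ)..1, L2 1 * L2 h * t ^ (-(1 / 2) : ℝ) :=
        (le_abs_self _).trans <| intervalIntegral.norm_integral_le_of_norm_le zero_le_one
          (.of_forall hslice)
          ((intervalIntegral.intervalIntegrable_rpow' (by norm_num)).const_mul _)
    _ = 2 * L2 1 * L2 h := by
        rw [intervalIntegral.integral_const_mul, integral_rpow (.inl (by norm_num))]
        norm_num
        ring

lemma volume_real_Q3_pos : 0 < volume.real Q3 := by
  rw [Measure.real, Q3, volume_pi_pi]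
  simp [ENNReal.toReal_ofReal pi_pos.le, pi_pos]

lemma norm_sub_le_of_mem_Q3 {w : Pt} (hx : x ∈ Q3) (hw : w ∈ Q3) : ‖w - x‖ ≤ 2 * π :=
  (pi_norm_le_iff_of_nonneg two_pi_pos.le).2 fun i => by
    simpa [dist_eq] using Real.dist_le_of_mem_Icc (hw i trivial) (hx i trivial)

lemma abs_le_taylor_of_mem_Q3 (hf : SmoothS f) {w : Pt} (hx : x ∈ Q3) (hw : w ∈ Q3) :
    |f x| ≤ |f w| + 2 * π * gradAbs f w
      + (2 * π) ^ 2 * ∫ t in (0 : ℝ)..1, t * hessAbs f (x + t • (w - x)) := by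
  have hgrad := gradAbs_nonneg f w
  have hrem : 0 ≤ ∫ t in (0 : ℝ)..1, t * hessAbs f (x + t • (w - x)) :=
    intervalIntegral.integral_nonneg zero_le_one fun t ht => mul_nonneg ht.1 (hessAbs_nonneg f _)
  have hnorm := norm_sub_le_of_mem_Q3 hx hw
  have htaylor := abs_le_taylor hf x (w - x)
  rw [add_sub_cancel] at htaylor
  exact htaylor.trans (by gcongr)

lemma Linf_isBigO_HsNorm_two : Linf =O[𝓟 {f | SmoothS f}] HsNorm 2 := by
  refine isBigO_principal.2 ⟨(volume.real Q3)⁻¹ * (L2 1 * (1 + 6 * π + 72 * π ^ 2)),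
    fun f hf => ?_⟩
  replace hf : SmoothS f := hf
  rw [norm_of_nonneg (Linf_nonneg f), norm_of_nonneg (HsNorm_nonneg 2 f)]
  refine Linf_le fun x hx => ?_
  let I : SF := fun w => ∫ t in (0 : ℝ)..1, t * hessAbs f (x + t • (w - x))
  have hI : Continuous I :=
    intervalIntegral.continuous_parametric_intervalIntegral_of_continuous'
      (continuous_snd.mul ((continuous_hessAbs hf).comp (by fun_prop))) _ _
  have hf₀ := integrableOn_Q3 hf.continuous.abs
  have hf₁ := integrableOn_Q3 ((continuous_gradAbs hf).const_mul (2 * π))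
  have hf₀₁ : IntegrableOn (fun w => |f w| + 2 * π * gradAbs f w) Q3 := hf₀.add hf₁
  have hf₂ := integrableOn_Q3 (hI.const_mul ((2 * π) ^ 2))
  have hL2 : L2 f ≤ HsNorm 2 f := L2_mderiv_le_HsNorm (α := 0) (by simp [ord]) f
  have hL2_grad : L2 (gradAbs f) ≤ 3 * HsNorm 2 f :=
    (L2_gradAbs_le hf).trans (by gcongr; exact HsNorm_mono one_le_two f)
  have hone : 0 ≤ L2 1 := L2_nonneg 1
  rw [mul_assoc, ← div_eq_inv_mul, le_div_iff₀' volume_real_Q3_pos]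
  calc volume.real Q3 * |f x| = ∫ _ in Q3, |f x| := by simp
    _ ≤ ∫ w in Q3, (|f w| + 2 * π * gradAbs f w + (2 * π) ^ 2 * I w) :=
        setIntegral_mono_on (integrableOn_Q3 continuous_const) (hf₀₁.add hf₂)
          measurableSet_Q3 fun w hw => abs_le_taylor_of_mem_Q3 hf hx hw
    _ = (∫ w in Q3, |f w|) + 2 * π * (∫ w in Q3, gradAbs f w) + (2 * π) ^ 2 * ∫ w in Q3, I w := by
        rw [integral_add hf₀₁ hf₂, integral_add hf₀ hf₁, integral_const_mul,
          integral_const_mul]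
    _ ≤ L2 1 * HsNorm 2 f + 2 * π * (L2 1 * (3 * HsNorm 2 f))
        + (2 * π) ^ 2 * (2 * L2 1 * (9 * HsNorm 2 f)) := by
        gcongr
        · simpa [L2] using ((le_abs_self _).trans (abs_integral_le_L2 hf.continuous.abs)).trans
            (mul_le_mul_of_nonneg_left (by simpa [L2] using hL2) hone)
        · exact (le_abs_self _).trans ((abs_integral_le_L2 (continuous_gradAbs hf)).trans
            (by gcongr))
        · exact (integral_integral_comp_homothety_le (continuous_hessAbs hf) hx).trans
            (by gcongr; exact L2_hessAbs_le hf)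
    _ = L2 1 * (1 + 6 * π + 72 * π ^ 2) * HsNorm 2 f := by ring

end SobolevEmbedding

section Glaeser

lemma sq_deriv_le_two_mul {f f' f'' : ℝ → ℝ} {B : ℝ} (hf : ∀ y, HasDerivAt f (f' y) y)
    (hf' : ∀ y, HasDerivAt f' (f'' y) y) (h0 : ∀ y, 0 ≤ f y) (hB : ∀ y, f'' y ≤ B) (t : ℝ) :
    f' t ^ 2 ≤ 2 * B * f t := by
  -- `φ` is convex and critical at `t`, hence `f` lies below its tangent parabola of curvature `B`,
  -- which is therefore nonnegative and has nonpositive discriminant.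
  let φ (y : ℝ) : ℝ := B / 2 * (y - t) ^ 2 + f' t * (y - t) - f y
  have hφ (y : ℝ) : HasDerivAt φ (B * (y - t) + f' t - f' y) y := by
    have hsub : HasDerivAt (fun y => y - t) 1 y := (hasDerivAt_id y).sub_const t
    convert! (((hsub.pow 2).const_mul (B / 2)).add (hsub.const_mul (f' t))).sub (hf y) using 1
    norm_num
    ring
  have hφ' (y : ℝ) : HasDerivAt (fun y => B * (y - t) + f' t - f' y) (B - f'' y) y := by
    simpa using ((((hasDerivAt_id y).sub_const t).const_mul B).add_const (f' t)).fun_sub (hf' y)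
  have hconvex : ConvexOn ℝ Set.univ φ :=
    convexOn_of_hasDerivWithinAt2_nonneg convex_univ
      (fun y _ => (hφ y).continuousAt.continuousWithinAt) (fun y _ => (hφ y).hasDerivWithinAt)
      (fun y _ => (hφ' y).hasDerivWithinAt) fun y _ => sub_nonneg.2 (hB y)
  have hmin : IsMinOn φ Set.univ t := hconvex.isMinOn_of_rightDeriv_eq_zero (by simp) <| by
    simpa using (hφ t).hasDerivWithinAt.derivWithin (uniqueDiffWithinAt_Ioi t)
  have hquad (τ : ℝ) : 0 ≤ B / 2 * (τ * τ) + f' t * τ + f t := by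
    have := isMinOn_iff.1 hmin (t + τ) trivial
    simp only [φ, sub_self, add_sub_cancel_left] at this
    linarith [h0 (t + τ)]
  have := discrim_le_zero hquad
  rw [discrim] at this
  linarith

lemma sq_pd_le_two_mul {u : SF} {i : Fin 3} {B : ℝ} (hu : SmoothS u) (h0 : ∀ x, 0 ≤ u x)
    (hB : ∀ x, pd i (pd i u) x ≤ B) (x : Pt) : pd i u x ^ 2 ≤ 2 * B * u x := by
  simpa [pd] using sq_deriv_le_two_mul (hasDerivAt_comp_line hu x (Pi.single i 1))
    (hasDerivAt_comp_line (hu.pd i) x (Pi.single i 1)) (fun t => h0 _) (fun t => hB _) 0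

end Glaeser

/-! A bound `f =O[𝓟 S] g` over a principal filter holds with one constant on all of `S`. -/

section UniformBounds

variable {D ι : Type*} {S : Set D} {t : Finset ι} {F : D → ι → SF} {X : D → ℝ}

lemma isBigO_principal_of_le {f g : D → ℝ} (h0 : ∀ d ∈ S, 0 ≤ f d) (h : ∀ d ∈ S, f d ≤ g d) :
    f =O[𝓟 S] g :=
  isBigO_principal.2 ⟨1, fun d hd => by
    rw [one_mul, norm_of_nonneg (h0 d hd)]
    exact (h d hd).trans (le_norm_self _)⟩

lemma isBigO_Linf_sum_smul (hF : ∀ d ∈ S, ∀ k ∈ t, Continuous (F d k)) (c : ι → ℝ)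
    (h : ∀ k ∈ t, (fun d => Linf (F d k)) =O[𝓟 S] X) :
    (fun d => Linf (∑ k ∈ t, c k • F d k)) =O[𝓟 S] X :=
  (isBigO_principal_of_le (fun _ _ => Linf_nonneg _)
    fun d hd => Linf_sum_smul_le (hF d hd) c).trans <|
      .fun_sum fun k hk => (h k hk).const_mul_left |c k|

lemma isBigO_L2_sum_smul (hF : ∀ d ∈ S, ∀ k ∈ t, Continuous (F d k)) (c : ι → ℝ)
    (h : ∀ k ∈ t, (fun d => L2 (F d k)) =O[𝓟 S] X) :
    (fun d => L2 (∑ k ∈ t, c k • F d k)) =O[𝓟 S] X :=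
  (isBigO_principal_of_le (fun _ _ => L2_nonneg _)
    fun d hd => L2_sum_smul_le (hF d hd) c).trans <|
      .fun_sum fun k hk => (h k hk).const_mul_left |c k|

variable {a b : D → SF} {A B : D → ℝ}

lemma isBigO_Linf_mul (ha : ∀ d ∈ S, Continuous (a d)) (hb : ∀ d ∈ S, Continuous (b d))
    (hA : (fun d => Linf (a d)) =O[𝓟 S] A) (hB : (fun d => Linf (b d)) =O[𝓟 S] B) :
    (fun d => Linf (a d * b d)) =O[𝓟 S] fun d => A d * B d :=
  (isBigO_principal_of_le (fun _ _ => Linf_nonneg _)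
    fun d hd => Linf_mul_le (ha d hd) (hb d hd)).trans (hA.mul hB)

lemma isBigO_L2_mul (ha : ∀ d ∈ S, Continuous (a d)) (hb : ∀ d ∈ S, Continuous (b d))
    (hA : (fun d => Linf (a d)) =O[𝓟 S] A) (hB : (fun d => L2 (b d)) =O[𝓟 S] B) :
    (fun d => L2 (a d * b d)) =O[𝓟 S] fun d => A d * B d :=
  (isBigO_principal_of_le (fun _ _ => L2_nonneg _)
    fun d hd => L2_mul_le (ha d hd) (hb d hd)).trans (hA.mul hB)

lemma isBigO_Linf_mderiv {γ : Fin 3 → ℕ} {k : ℕ} (hγ : ord γ + 2 ≤ k) :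
    (fun f => Linf (mderiv γ f)) =O[𝓟 {f | SmoothS f}] HsNorm k := by
  have hmaps : Tendsto (mderiv γ) (𝓟 {f | SmoothS f}) (𝓟 {f | SmoothS f}) :=
    tendsto_principal_principal.2 fun f hf => SmoothS.mderiv hf γ
  refine (Linf_isBigO_HsNorm_two.comp_tendsto hmaps).trans ?_
  refine isBigO_principal_of_le (fun f _ => HsNorm_nonneg _ _) fun f hf => ?_
  exact (HsNorm_mderiv_le hf γ 2).trans (HsNorm_mono (by omega) f)

end UniformBounds

section Reciprocal

/-- Smooth periodic functions bounded below by `r`, which for `r > 0` are the total densities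
`N + ρ⁰` of the fluid. -/
structure IsDensity (r : ℝ) (u : SF) : Prop where
  smooth : SmoothS u
  periodic : PerS u
  le (x : Pt) : r ≤ u x

/-- The growth rate `√(1 + ‖u‖_{H^s})` of one derivative of `u⁻¹`. -/
noncomputable def growth (s : ℕ) (u : SF) : ℝ := √(1 + HsNorm s u)

variable {r : ℝ} {s : ℕ} {u : SF} {β γ : Fin 3 → ℕ}

lemma one_le_growth (s : ℕ) (u : SF) : 1 ≤ growth s u :=
  one_le_sqrt.2 (le_add_of_nonneg_right (HsNorm_nonneg s u))

lemma growth_sq (s : ℕ) (u : SF) : growth s u ^ 2 = 1 + HsNorm s u :=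
  sq_sqrt (add_nonneg zero_le_one (HsNorm_nonneg s u))

lemma HsNorm_isBigO_growth_pow (s : ℕ) (S : Set SF) {n : ℕ} (hn : 2 ≤ n) :
    HsNorm s =O[𝓟 S] fun u => growth s u ^ n :=
  isBigO_principal_of_le (fun u _ => HsNorm_nonneg s u) fun u _ =>
    calc HsNorm s u ≤ growth s u ^ 2 := by rw [growth_sq]; linarith
      _ ≤ growth s u ^ n := pow_le_pow_right₀ (one_le_growth s u) hn

namespace IsDensity

lemma pos (hr : 0 < r) (hu : IsDensity r u) (x : Pt) : 0 < u x := hr.trans_le (hu.le x)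

lemma ne_zero (hr : 0 < r) (hu : IsDensity r u) (x : Pt) : u x ≠ 0 := (hu.pos hr x).ne'

lemma smooth_inv (hr : 0 < r) (hu : IsDensity r u) : SmoothS u⁻¹ := hu.smooth.inv (hu.ne_zero hr)

lemma continuous_mderiv_inv (hr : 0 < r) (hu : IsDensity r u) (β : Fin 3 → ℕ) :
    Continuous (mderiv β u⁻¹) :=
  ((hu.smooth_inv hr).mderiv β).continuous

lemma continuous_inv_mul_mderiv (hr : 0 < r) (hu : IsDensity r u) (γ : Fin 3 → ℕ) :
    Continuous (u⁻¹ * mderiv γ u) :=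
  ((hu.smooth_inv hr).mul (hu.smooth.mderiv γ)).continuous

lemma Linf_inv_le (hr : 0 < r) (hu : IsDensity r u) : Linf u⁻¹ ≤ r⁻¹ :=
  Linf_le fun x _ => by
    rw [Pi.inv_apply, abs_inv, abs_of_pos (hu.pos hr x)]
    exact inv_anti₀ hr (hu.le x)

lemma sq_Linf_inv_mul_pd_le (hr : 0 < r) (hu : IsDensity r u) (i : Fin 3) :
    Linf (u⁻¹ * pd i u) ^ 2 ≤ 2 * r⁻¹ * Linf (pd i (pd i u)) := by
  have hpd : SmoothS (pd i (pd i u)) := (hu.smooth.pd i).pd i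
  have hB (x : Pt) : pd i (pd i u) x ≤ Linf (pd i (pd i u)) :=
    (le_abs_self _).trans (((hu.periodic.pd i).pd i).abs_le_Linf hpd.continuous x)
  have hnonneg : 0 ≤ 2 * r⁻¹ * Linf (pd i (pd i u)) := by
    have := Linf_nonneg (pd i (pd i u)); positivity
  refine (le_sqrt (Linf_nonneg _) hnonneg).1 <| Linf_le fun x _ => abs_le_sqrt ?_
  have hx := hu.pos hr x
  calc (u⁻¹ * pd i u) x ^ 2 = (u x)⁻¹ ^ 2 * pd i u x ^ 2 := by
        rw [Pi.mul_apply, Pi.inv_apply, mul_pow]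
    _ ≤ (u x)⁻¹ ^ 2 * (2 * Linf (pd i (pd i u)) * u x) := by
        gcongr
        exact sq_pd_le_two_mul hu.smooth (fun y => (hu.pos hr y).le) hB x
    _ = 2 * (u x)⁻¹ * Linf (pd i (pd i u)) := by field_simp
    _ ≤ 2 * r⁻¹ * Linf (pd i (pd i u)) := by
        gcongr
        · exact Linf_nonneg _
        · exact hu.le x

lemma mderiv_inv_eq_sum (hr : 0 < r) (hu : IsDensity r u) (hβ : β ≠ 0) :
    mderiv β u⁻¹ = -∑ γ ∈ (Iic β).erase 0, (∏ i, ((β i).choose (γ i) : ℝ)) •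
      (u⁻¹ * mderiv γ u * mderiv (β - γ) u⁻¹) := by
  rw [mderiv_inv (hu.ne_zero hr) hβ, mcomm_eq_sum hu.smooth (hu.smooth_inv hr), mul_sum]
  simp only [mul_smul_comm, mul_assoc]

end IsDensity

lemma isBigO_Linf_inv (hr : 0 < r) :
    (fun u => Linf u⁻¹) =O[𝓟 {u | IsDensity r u}] fun _ => (1 : ℝ) :=
  (isBigO_principal_of_le (fun _ _ => Linf_nonneg _) fun _ hu => hu.Linf_inv_le hr).trans
    (isBigO_const_const _ one_ne_zero _)

lemma isBigO_Linf_inv_mul_mderiv (hr : 0 < r) (hs : 4 ≤ s) (hγ : γ ≠ 0) (hγs : ord γ + 2 ≤ s) :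
    (fun u => Linf (u⁻¹ * mderiv γ u)) =O[𝓟 {u | IsDensity r u}]
      fun u => growth s u ^ ord γ := by
  have hmono : 𝓟 {u | IsDensity r u} ≤ 𝓟 {u | SmoothS u} :=
    principal_mono.2 fun _ hu => IsDensity.smooth hu
  have hHs {n : ℕ} (hn : 2 ≤ n) := HsNorm_isBigO_growth_pow s {u | IsDensity r u} hn
  obtain h2 | h2 := le_or_gt 2 (ord γ)
  · have := isBigO_Linf_mul (fun u hu => (hu.smooth_inv hr).continuous)
      (fun u hu => (hu.smooth.mderiv γ).continuous) (isBigO_Linf_inv hr)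
      ((isBigO_Linf_mderiv hγs).mono hmono)
    simpa only [one_mul] using this.trans ((isBigO_refl _ _).mul (hHs h2))
  · have hone : ord γ = 1 := by have := ord_eq_zero.not.2 hγ; omega
    obtain ⟨i, rfl⟩ := exists_eq_single_of_ord_eq_one hone
    have hpd : (fun u => Linf (pd i (pd i u))) =O[𝓟 {u | IsDensity r u}] HsNorm s := by
      have := (isBigO_Linf_mderiv (γ := Pi.single i 1 + Pi.single i 1) (k := s)
        (by simp only [ord_add, ord_single_one]; omega)).mono hmono
      refine this.congr' (eventuallyEq_principal.2 fun u hu => ?_) .rfl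
      have hsm := IsDensity.smooth hu
      rw [← mderiv_pd hsm, mderiv_single_one]
    simp only [hone, pow_one, mderiv_single_one]
    refine IsBigO.of_pow two_ne_zero ?_
    exact (isBigO_principal_of_le (fun _ _ => sq_nonneg _)
      fun u hu => hu.sq_Linf_inv_mul_pd_le hr i).trans
        ((hpd.trans (hHs le_rfl)).const_mul_left _)

lemma isBigO_Linf_mderiv_inv (hr : 0 < r) (hs : 4 ≤ s) (hβ : ord β + 2 ≤ s) :
    (fun u => Linf (mderiv β u⁻¹)) =O[𝓟 {u | IsDensity r u}] fun u => growth s u ^ ord β := by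
  induction hn : ord β using Nat.strong_induction_on generalizing β with | _ n ih => ?_
  subst hn
  obtain rfl | h0 := eq_or_ne β 0
  · rw [ord_eq_zero.2 rfl]
    exact isBigO_Linf_inv hr
  have hexpand : (fun u => Linf (mderiv β u⁻¹)) =ᶠ[𝓟 {u | IsDensity r u}] _ :=
    eventuallyEq_principal.2 fun u hu => congrArg Linf (hu.mderiv_inv_eq_sum hr h0)
  refine hexpand.trans_isBigO ?_
  simp only [Linf_neg]
  refine isBigO_Linf_sum_smul (fun u hu γ _ => ?_) _ fun γ hγ => ?_
  · exact (hu.continuous_inv_mul_mderiv hr γ).mul (hu.continuous_mderiv_inv hr _)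
  obtain ⟨hγ0, hγβ⟩ := mem_erase.1 hγ
  have hord := ord_sub_add_ord (mem_Iic.1 hγβ)
  have hpos := ord_eq_zero.not.2 hγ0
  have := isBigO_Linf_mul (fun u hu => hu.continuous_inv_mul_mderiv hr γ)
    (fun u hu => hu.continuous_mderiv_inv hr _) (isBigO_Linf_inv_mul_mderiv hr hs hγ0 (by omega))
    (ih (ord (β - γ)) (by omega) (by omega) rfl)
  simpa only [← pow_add, add_comm (ord γ), hord] using this

lemma isBigO_L2_inv_mul_mderiv (hr : 0 < r) (hγ : 2 ≤ ord γ) (hγs : ord γ ≤ s) :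
    (fun u => L2 (u⁻¹ * mderiv γ u)) =O[𝓟 {u | IsDensity r u}] fun u => growth s u ^ ord γ := by
  have hL2 : (fun u => L2 (mderiv γ u)) =O[𝓟 {u | IsDensity r u}] fun u => growth s u ^ ord γ :=
    (isBigO_principal_of_le (fun _ _ => L2_nonneg _)
      fun u _ => L2_mderiv_le_HsNorm hγs u).trans (HsNorm_isBigO_growth_pow s _ hγ)
  simpa only [one_mul] using isBigO_L2_mul (fun u hu => (hu.smooth_inv hr).continuous)
    (fun u hu => (hu.smooth.mderiv γ).continuous) (isBigO_Linf_inv hr) hL2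

lemma isBigO_L2_mderiv_inv (hr : 0 < r) (hs : 4 ≤ s) (hβ : ord β ≤ s) :
    (fun u => L2 (mderiv β u⁻¹)) =O[𝓟 {u | IsDensity r u}] fun u => growth s u ^ ord β := by
  induction hn : ord β using Nat.strong_induction_on generalizing β with | _ n ih => ?_
  subst hn
  obtain hlow | hhigh := le_or_gt (ord β + 2) s
  · refine (isBigO_principal_of_le (fun _ _ => L2_nonneg _)
      fun u hu => L2_le_mul_Linf (hu.continuous_mderiv_inv hr β)).trans ?_
    exact (isBigO_Linf_mderiv_inv hr hs hlow).const_mul_left (L2 1)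
  have h0 : β ≠ 0 := ord_eq_zero.not.1 (by omega)
  have hexpand : (fun u => L2 (mderiv β u⁻¹)) =ᶠ[𝓟 {u | IsDensity r u}] _ :=
    eventuallyEq_principal.2 fun u hu => congrArg L2 (hu.mderiv_inv_eq_sum hr h0)
  refine hexpand.trans_isBigO ?_
  simp only [L2_neg]
  refine isBigO_L2_sum_smul (fun u hu γ _ => ?_) _ fun γ hγ => ?_
  · exact (hu.continuous_inv_mul_mderiv hr γ).mul (hu.continuous_mderiv_inv hr _)
  obtain ⟨hγ0, hγβ⟩ := mem_erase.1 hγ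
  have hord := ord_sub_add_ord (mem_Iic.1 hγβ)
  have hpos := ord_eq_zero.not.2 hγ0
  obtain hγs | hγs := le_or_gt (ord γ + 2) s
  · have := isBigO_L2_mul (fun u hu => hu.continuous_inv_mul_mderiv hr γ)
      (fun u hu => hu.continuous_mderiv_inv hr _) (isBigO_Linf_inv_mul_mderiv hr hs hγ0 hγs)
      (ih (ord (β - γ)) (by omega) (by omega) rfl)
    simpa only [← pow_add, add_comm (ord γ), hord] using this
  -- If almost all derivatives fall on `u`, the sup norm goes to `∂^{β-γ} u⁻¹` instead.
  · have := isBigO_L2_mul (fun u hu => hu.continuous_mderiv_inv hr _)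
      (fun u hu => hu.continuous_inv_mul_mderiv hr γ)
      (isBigO_Linf_mderiv_inv hr hs (β := β - γ) (by omega))
      (isBigO_L2_inv_mul_mderiv (γ := γ) (s := s) hr (by omega) (by omega))
    simpa only [← pow_add, hord, mul_comm (mderiv (β - γ) _)] using this

end Reciprocal

section CommutatorBound

variable {r : ℝ} {k s : ℕ} {α β δ : Fin 3 → ℕ}

lemma isBigO_L2_mderiv_inv_mul (hr : 0 < r) (hk : 3 ≤ k) (hβ : ord β ≤ k + 1) (hδ : ord δ ≤ k)
    (hβδ : ord β + ord δ ≤ k + 1) :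
    (fun p : SF × SF => L2 (mderiv β p.1⁻¹ * mderiv δ p.2))
      =O[𝓟 {p | IsDensity r p.1 ∧ SmoothS p.2}]
        fun p => growth (k + 1) p.1 ^ ord β * HsNorm k p.2 := by
  have hfst : Tendsto Prod.fst (𝓟 {p : SF × SF | IsDensity r p.1 ∧ SmoothS p.2})
      (𝓟 {u | IsDensity r u}) := tendsto_principal_principal.2 fun p hp => hp.1
  have hsnd : Tendsto Prod.snd (𝓟 {p : SF × SF | IsDensity r p.1 ∧ SmoothS p.2})
      (𝓟 {g | SmoothS g}) := tendsto_principal_principal.2 fun p hp => hp.2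
  obtain hβs | hβs := le_or_gt (ord β + 2) (k + 1)
  · have hL2 : (fun g => L2 (mderiv δ g)) =O[𝓟 {g | SmoothS g}] HsNorm k :=
      isBigO_principal_of_le (fun _ _ => L2_nonneg _) fun g _ => L2_mderiv_le_HsNorm hδ g
    exact isBigO_L2_mul (fun p hp => hp.1.continuous_mderiv_inv hr β)
      (fun p hp => (SmoothS.mderiv hp.2 δ).continuous)
      ((isBigO_Linf_mderiv_inv hr (by omega) hβs).comp_tendsto hfst) (hL2.comp_tendsto hsnd)
  · have := isBigO_L2_mul (fun p hp => (SmoothS.mderiv hp.2 δ).continuous)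
      (fun p hp => hp.1.continuous_mderiv_inv hr β)
      ((isBigO_Linf_mderiv (k := k) (by omega)).comp_tendsto hsnd)
      ((isBigO_L2_mderiv_inv (s := k + 1) hr (by omega) hβ).comp_tendsto hfst)
    simpa only [mul_comm, Function.comp_def] using this

lemma isBigO_L2_mcomm_inv (hr : 0 < r) (hk : 3 ≤ k) (hα : ord α ≤ k + 1) :
    (fun p : SF × SF => L2 (mcomm α p.1⁻¹ p.2))
      =O[𝓟 {p | IsDensity r p.1 ∧ SmoothS p.2}]
        fun p => growth (k + 1) p.1 ^ (k + 1) * HsNorm k p.2 := by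
  have hexpand : (fun p : SF × SF => L2 (mcomm α p.1⁻¹ p.2))
      =ᶠ[𝓟 {p | IsDensity r p.1 ∧ SmoothS p.2}] _ :=
    eventuallyEq_principal.2 fun p hp =>
      congrArg L2 (mcomm_eq_sum (hp.1.smooth_inv hr) hp.2 α)
  refine hexpand.trans_isBigO (isBigO_L2_sum_smul (fun p hp β _ => ?_) _ fun β hβ => ?_)
  · exact (hp.1.continuous_mderiv_inv hr β).mul (SmoothS.mderiv hp.2 _).continuous
  obtain ⟨hβ0, hβα⟩ := mem_erase.1 hβ
  have hord := ord_sub_add_ord (mem_Iic.1 hβα)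
  have hpos := ord_eq_zero.not.2 hβ0
  refine (isBigO_L2_mderiv_inv_mul hr hk (by omega) (by omega) (by omega)).trans ?_
  refine isBigO_principal_of_le (fun p _ => ?_) fun p _ => ?_
  · have := one_le_growth (k + 1) p.1; have := HsNorm_nonneg k p.2; positivity
  · gcongr
    · exact HsNorm_nonneg k p.2
    · exact one_le_growth (k + 1) p.1
    · omega

lemma exists_L2_mcomm_inv_lap_le (hr : 0 < r) (hs : 4 ≤ s) (hα : ord α ≤ s) :
    ∃ C > 0, ∀ u Θ, IsDensity r u → SmoothS Θ →
      L2 (mcomm α u⁻¹ (lap Θ)) ≤ C * (growth s u ^ s * HsNormV s (grad Θ)) := by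
  obtain ⟨k, rfl⟩ := Nat.exists_eq_add_of_le' (show 1 ≤ s by omega)
  obtain ⟨C, hC, hle⟩ := (isBigO_L2_mcomm_inv hr (by omega) hα).exists_pos
  refine ⟨C * 3, by positivity, fun u Θ hu hΘ => ?_⟩
  have hR : 0 ≤ growth (k + 1) u ^ (k + 1) := by
    have := one_le_growth (k + 1) u; positivity
  have h := isBigOWith_principal.1 hle (u, lap Θ) ⟨hu, hΘ.lap⟩
  rw [norm_of_nonneg (L2_nonneg _), norm_of_nonneg (mul_nonneg hR (HsNorm_nonneg k _))] at h
  calc _ ≤ C * (growth (k + 1) u ^ (k + 1) * HsNorm k (lap Θ)) := h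
    _ ≤ C * (growth (k + 1) u ^ (k + 1) * (3 * HsNormV (k + 1) (grad Θ))) := by
        gcongr
        exact HsNorm_lap_le hΘ k
    _ = _ := by ring

lemma mul_le_sq_add_sq {η : ℝ} (hη : 0 < η) (a b : ℝ) : a * b ≤ η * a ^ 2 + (4 * η)⁻¹ * b ^ 2 := by
  have h : 0 ≤ η * (a - (2 * η)⁻¹ * b) ^ 2 := by positivity
  field_simp at h ⊢
  linarith

lemma exists_abs_ip_mcomm_inv_lap_le (hr : 0 < r) (hs : 4 ≤ s) (hα : ord α ≤ s) {η : ℝ}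
    (hη : 0 < η) :
    ∃ C > 0, ∀ u Θ, IsDensity r u → SmoothS Θ →
      |ip (mcomm α u⁻¹ (lap Θ)) (mderiv α Θ)| ≤ η * HsNormV s (grad Θ) ^ 2
        + C * (1 + HsNorm s u) ^ s * L2 (mderiv α Θ) ^ 2 := by
  obtain ⟨C, hC, hle⟩ := exists_L2_mcomm_inv_lap_le hr hs hα
  refine ⟨(4 * η)⁻¹ * C ^ 2, by positivity, fun u Θ hu hΘ => ?_⟩
  have hinv := hu.smooth_inv hr
  have hcont : Continuous (mcomm α u⁻¹ (lap Θ)) :=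
    (SmoothS.mderiv (hinv.mul hΘ.lap) α).continuous.sub
      (hinv.mul (hΘ.lap.mderiv α)).continuous
  calc |ip (mcomm α u⁻¹ (lap Θ)) (mderiv α Θ)|
      ≤ L2 (mcomm α u⁻¹ (lap Θ)) * L2 (mderiv α Θ) := abs_ip_le hcont (hΘ.mderiv α).continuous
    _ ≤ C * (growth s u ^ s * HsNormV s (grad Θ)) * L2 (mderiv α Θ) :=
        mul_le_mul_of_nonneg_right (hle u Θ hu hΘ) (L2_nonneg _)
    _ = HsNormV s (grad Θ) * (C * growth s u ^ s * L2 (mderiv α Θ)) := by ring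
    _ ≤ η * HsNormV s (grad Θ) ^ 2
        + (4 * η)⁻¹ * (C * growth s u ^ s * L2 (mderiv α Θ)) ^ 2 := mul_le_sq_add_sq hη _ _
    _ = _ := by rw [← growth_sq]; ring

lemma one_add_add_pow_le {K X : ℝ} (hK : 0 ≤ K) (hX : 0 ≤ X) (n : ℕ) :
    (1 + (X + K)) ^ n ≤ (1 + K) ^ n * 2 ^ (n - 1) * (X ^ n + 1) := by
  calc (1 + (X + K)) ^ n ≤ ((1 + K) * (X + 1)) ^ n := by
        gcongr
        nlinarith [mul_nonneg hK hX]
    _ ≤ (1 + K) ^ n * (2 ^ (n - 1) * (X ^ n + 1 ^ n)) := by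
        rw [mul_pow]
        gcongr
        exact add_pow_le hX zero_le_one n
    _ = _ := by rw [one_pow]; ring

end CommutatorBound

theorem commutator_diffusion_general {s : ℕ} (hs : 4 ≤ s) {α : Fin 3 → ℕ} (hα : ∑ i, α i ≤ s)
    (K : ℝ) {ρhat : ℝ} (hρhat : 0 < ρhat) {η : ℝ} (hη : 0 < η) :
    ∃ C > 0, ∀ ρ0 : SF, SmoothS ρ0 → PerS ρ0 → HsNorm s ρ0 ≤ K →
      ∀ N Θ : SF, SmoothS N → PerS N → SmoothS Θ → (∀ x, ρhat / 2 ≤ N x + ρ0 x) →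
        |ip (fun x => mderiv α (fun y => 1 / (N y + ρ0 y) * lap Θ y) x
              - 1 / (N x + ρ0 x) * mderiv α (lap Θ) x) (mderiv α Θ)|
          ≤ η * HsNormV s (grad Θ) ^ 2 + C * (HsNorm s N ^ s + 1) * L2 (mderiv α Θ) ^ 2 := by
  obtain ⟨C, hC, hle⟩ := exists_abs_ip_mcomm_inv_lap_le (half_pos hρhat) hs hα hη
  refine ⟨C * ((1 + |K|) ^ s * 2 ^ (s - 1)), by positivity,
    fun ρ0 hρ0 hρ0per hK N Θ hN hNper hΘ hlow => ?_⟩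
  have hu : IsDensity (ρhat / 2) (N + ρ0) :=
    ⟨hN.add hρ0, fun x i => congrArg₂ (· + ·) (hNper x i) (hρ0per x i), hlow⟩
  have hnorm : 1 + HsNorm s (N + ρ0) ≤ 1 + (HsNorm s N + |K|) := by
    have := HsNorm_add_le hN hρ0 s
    linarith [le_abs_self K]
  have hpow := (pow_le_pow_left₀ (add_nonneg zero_le_one (HsNorm_nonneg s _)) hnorm s).trans
    (one_add_add_pow_le (abs_nonneg K) (HsNorm_nonneg s N) s)
  simp only [one_div]
  refine (hle (N + ρ0) Θ hu hΘ).trans ?_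
  rw [mul_assoc C _ (HsNorm s N ^ s + 1)]
  gcongr

end

/-- commutator estimate for the heat-diffusion term.
Let `s > 7/2` be an integer and `|α| ≤ s`. Suppose `ρ⁰ ∈ H^{s+1}(𝕋³)` with
`‖ρ⁰‖_{H^{s+1}} ≤ K` and `ρ⁰ ≥ ρ̂ > 0`; let `N ∈ H^s` with `N + ρ⁰ ≥ ρ̂/2` and
`Θ ∈ H^{s+1}` (here: smooth periodic). Then for every `η > 0` there is
`C_η = C(η,s,K,ρ̂)` with
`|⟨∂^α((1/(N+ρ⁰))ΔΘ) − (1/(N+ρ⁰))∂^αΔΘ, ∂^αΘ⟩_{L²}|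
  ≤ η‖∇Θ‖²_{H^s} + C_η(‖(N,Θ)‖^s_{H^s}+1)(‖∂^αΘ‖²_{L²}+‖∂^αN‖²_{L²})`. -/
theorem commutator_diffusion (s : ℕ) (hs : 7/2 < (s:ℝ)) (α : Fin 3 → ℕ)
    (hα : (∑ i, α i) ≤ s) (K ρhat : ℝ) (hρhat : 0 < ρhat) :
    ∀ η > (0:ℝ), ∃ C > (0:ℝ),
      ∀ ρ0 : SF, SmoothS ρ0 → PerS ρ0 → HsNorm (s+1) ρ0 ≤ K → (∀ x, ρhat ≤ ρ0 x) →
      ∀ (N Θ : SF), SmoothS N → PerS N → SmoothS Θ → PerS Θ →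
        (∀ x, ρhat / 2 ≤ N x + ρ0 x) →
        |ip (fun x => mderiv α (fun y => 1 / (N y + ρ0 y) * lap Θ y) x
              - 1 / (N x + ρ0 x) * mderiv α (lap Θ) x) (mderiv α Θ)|
          ≤ η * (HsNormV s (grad Θ)) ^ 2
            + C * ((HsNorm s N + HsNorm s Θ) ^ s + 1)
                * ((L2 (mderiv α Θ)) ^ 2 + (L2 (mderiv α N)) ^ 2) := by
  intro η hη
  obtain ⟨C, hC, hle⟩ :=
    commutator_diffusion_general (by exact_mod_cast (by linarith : (3 : ℝ) < s)) hα K hρhat hη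
  refine ⟨C, hC, fun ρ0 hρ0 hρ0per hK _ N Θ hN hNper hΘ _ hlow =>
    (hle ρ0 hρ0 hρ0per ((HsNorm_mono s.le_succ ρ0).trans hK) N Θ hN hNper hΘ hlow).trans ?_⟩
  have hN0 := HsNorm_nonneg s N
  have hΘ0 := HsNorm_nonneg s Θ
  gcongr
  · exact le_add_of_nonneg_right hΘ0
  · exact le_add_of_nonneg_right (sq_nonneg _)
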